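/- Let F be a field with char F ≠ 2, let r, m ≥ 0 be integers and d = m + 2r + 1. Let λ : {1,…,d} → Fˣ, set μ_i = λ_i·λ_{d+1−i}⁻¹, and assume μ_i = 1 for every i ∈ {1,…,r} ∪ {d−r,…,d}. Let N ∈ GL_d(F) be the matrix with N_{d+1−i,i} = λ_i for 1 ≤ i ≤ d and all other entries 0, and define φ : M_d(F) → M_d(F) by φ(X) = −N⁻¹·Xᵀ·N (so φ(E_{i,j}) = −(λ_{d+1−i}/λ_{d+1−j})·E_{d+1−j,d+1−i}). Let 𝔫 ⊆ M_d(F) be the span of the elementary matrices E_{i,j} with i < j and not (r < i and j ≤ d−r). Then φ(𝔫) = 𝔫; setting 𝔫^φ = {X ∈ 𝔫 : φ(X) = X}, the map id − φ induces an endomorphism of the quotient space 𝔫/𝔫^φ, and the determinant of this induced endomorphism equals 2^{r² + r + r·m''} · ( ∏_{i} (1 − μ_i) )^{r}, where the product is over those i with r+1 ≤ i ≤ d−r−1 and μ_i ≠ 1, and m'' = #{i : r+1 ≤ i ≤ d−r−1 and μ_i = 1}. -/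

import Mathlib

open Matrix

/-- The matrix `N` with `N_{d+1-i, i} = λ_i` for `1 ≤ i ≤ d` and all other entries `0`
(written 0-based: `N p q = λ_q` when `p + q = d - 1`). -/
def NmatJLW (F : Type*) [Field F] (d : ℕ) (lam : Fin d → Fˣ) : Matrix (Fin d) (Fin d) F :=
  Matrix.of fun p q => if (p : ℕ) + (q : ℕ) = d - 1 then (lam q : F) else 0

/-- Transposition as a linear map on `d × d` matrices. -/
def transposeLM (F : Type*) [Field F] (d : ℕ) :
    Matrix (Fin d) (Fin d) F →ₗ[F] Matrix (Fin d) (Fin d) F where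
  toFun X := Xᵀ
  map_add' X Y := by simp [Matrix.transpose_add]
  map_smul' c X := by simp [Matrix.transpose_smul]

/-- The linear map `φ : M_d(F) → M_d(F)`, `φ(X) = -N⁻¹ · Xᵀ · N`. -/
noncomputable def phiJLW (F : Type*) [Field F] (d : ℕ) (lam : Fin d → Fˣ) :
    Matrix (Fin d) (Fin d) F →ₗ[F] Matrix (Fin d) (Fin d) F :=
  -((LinearMap.mulLeft F (NmatJLW F d lam)⁻¹).comp
      ((LinearMap.mulRight F (NmatJLW F d lam)).comp (transposeLM F d)))

/-- The span `𝔫` of the elementary matrices `E_{i,j}` with `i < j` and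
`¬ (r < i ∧ j ≤ d - r)` (1-based), i.e. the matrices vanishing at all other
positions. -/
def nSubJLW (F : Type*) [Field F] (d r : ℕ) : Submodule F (Matrix (Fin d) (Fin d) F) where
  carrier := {X | ∀ a b : Fin d,
    ¬((a : ℕ) < (b : ℕ) ∧ ¬(r ≤ (a : ℕ) ∧ (b : ℕ) + 1 ≤ d - r)) → X a b = 0}
  add_mem' := by
    intro X Y hX hY a b h
    simp [Matrix.add_apply, hX a b h, hY a b h]
  zero_mem' := by intro a b h; rfl
  smul_mem' := by
    intro c X hX a b h
    simp [Matrix.smul_apply, hX a b h]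

/-- `𝔫^φ = {X ∈ 𝔫 : φ(X) = X}`, as a submodule of `𝔫`. -/
noncomputable def fixSubJLW (F : Type*) [Field F] (d r : ℕ) (lam : Fin d → Fˣ) :
    Submodule F ↥(nSubJLW F d r) :=
  Submodule.comap (nSubJLW F d r).subtype
    (LinearMap.ker (phiJLW F d lam - LinearMap.id))

/-- The index `d + 1 - i` (1-based), i.e. `d - 1 - a` (0-based). -/
def revIdxJLW {d : ℕ} (a : Fin d) : Fin d := ⟨d - 1 - (a : ℕ), by have h := a.isLt; omega⟩

/-- `μ_i = λ_i · λ_{d+1-i}⁻¹`. -/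
def muJLW {F : Type*} [Field F] {d : ℕ} (lam : Fin d → Fˣ) (a : Fin d) : F :=
  (lam a : F) * (((lam (revIdxJLW a))⁻¹ : Fˣ) : F)

/-! The entry of `φ X` at a position is a scalar multiple of the entry of `X` at the reflected
position in the antidiagonal. Hence `id - φ` splits into blocks indexed by the orbits of this
reflection on the positions `(a, b)` of `𝔫`. On the orbit of `(a, b)`, `φ ^ 2` is the scalar
`μ_b / μ_a`, and `μ_a = 1` if `(a, b)` is the representative on or above the antidiagonal. If
`μ_b = 1`, the orbit contributes a line to `𝔫 ⧸ 𝔫^φ`, on which `id - φ` is multiplication by `2`;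
here characteristic `≠ 2` ensures that the antidiagonal entries, negated by `φ`, survive in the
quotient. If `μ_b ≠ 1`, `id - φ` is invertible on the orbit, with determinant `1 - μ_b`. Each row
`a < r` (0-based) contributes every middle column once, and `2 (r - a)` further columns, all with
`μ_b = 1`. -/

section InducedOnQuotient

variable {R V M : Type*} [CommRing R] [AddCommGroup V] [Module R V] [AddCommGroup M] [Module R M]

/-- The endomorphism of `V ⧸ ker T` induced by an endomorphism `T` of `V`. -/
def quotKerMap (T : V →ₗ[R] V) : V ⧸ LinearMap.ker T →ₗ[R] V ⧸ LinearMap.ker T :=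
  (LinearMap.ker T).mapQ (LinearMap.ker T) T (LinearMap.ker_le_ker_comp T T)

theorem det_quotKerMap_eq_of_comp_eq {T : V →ₗ[R] V} {D : M →ₗ[R] M} {P : V →ₗ[R] M}
    (hP : Function.Surjective P) (hker : LinearMap.ker P = LinearMap.ker T)
    (hD : D ∘ₗ P = P ∘ₗ T) : LinearMap.det (quotKerMap T) = LinearMap.det D := by
  let e : (V ⧸ LinearMap.ker T) ≃ₗ[R] M :=
    (Submodule.quotEquivOfEq _ _ hker.symm).trans (P.quotKerEquivOfSurjective hP)
  have he : e ∘ₗ quotKerMap T ∘ₗ e.symm = D := by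
    rw [← LinearMap.comp_assoc, LinearEquiv.comp_toLinearMap_symm_eq]
    ext x
    exact LinearMap.congr_fun hD.symm x
  rw [← he, LinearMap.det_conj]

end InducedOnQuotient

section WeightedComp

variable {ι K : Type*} [Field K]

/-- The operator `1 + W` on functions `ι → K`, where `W x = c · (x ∘ σ)` is a weighted composition
operator. -/
def idAddWeightedComp (c : ι → K) (σ : ι → ι) : (ι → K) →ₗ[K] (ι → K) :=
  LinearMap.pi fun i => LinearMap.proj i + c i • LinearMap.proj (σ i)

theorem idAddWeightedComp_apply (c : ι → K) (σ : ι → ι) (x : ι → K) (i : ι) :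
    idAddWeightedComp c σ x i = x i + c i * x (σ i) :=
  rfl

variable {c : ι → K} {σ : ι → ι}

theorem idAddWeightedComp_apply_involution (hσ : Function.Involutive σ) {i : ι}
    (hi : c i * c (σ i) = 1) (x : ι → K) :
    idAddWeightedComp c σ x (σ i) = c (σ i) * idAddWeightedComp c σ x i := by
  simp only [idAddWeightedComp_apply, hσ i]
  linear_combination (-x (σ i)) * hi

/-- Where `c i * c (σ i) = 1`, `idAddWeightedComp c σ` acts as `2` on its range, so half
of the target, extended along `σ`, is a preimage. -/
theorem exists_orbit_values (h2 : (2 : K) ≠ 0) (hσ : Function.Involutive σ) {s : Finset ι}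
    (hs : ∀ i ∈ s, σ i ∈ s → σ i = i) (hc : ∀ i, σ i = i → c i = 1) (y u v : ι → K) :
    ∃ x : ι → K, (∀ i ∈ s, c i * c (σ i) = 1 → idAddWeightedComp c σ x i = y i) ∧
      ∀ i ∈ s, c i * c (σ i) ≠ 1 → x i = u i ∧ x (σ i) = v i := by
  classical
  refine ⟨fun j => if c j * c (σ j) = 1 then if j ∈ s then y j / 2 else c j * (y (σ j) / 2)
    else if j ∈ s then u j else v (σ j), fun i his hi => ?_, fun i his hi => ?_⟩
  · have hi' : c (σ i) * c i = 1 := by rw [mul_comm, hi]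
    simp only [idAddWeightedComp_apply, hσ i, hi, hi', his, if_true]
    by_cases hfix : σ i = i
    · simp only [hfix, his, hc i hfix, if_true]
      field_simp
      ring
    · rw [if_neg (mt (hs i his) hfix), ← mul_assoc, hi]
      field_simp
      ring
  · have hi' : c (σ i) * c i ≠ 1 := by rwa [mul_comm]
    have hσi : σ i ∉ s := fun h => hi (by simp [hs i his h, hc i (hs i his h)])
    simp [hσ i, hi, hi', his, hσi]

variable [DecidableEq K]

/-- Coordinates on the quotient of `ι → K` by the kernel of `idAddWeightedComp c σ`, where `s`
represents the orbits of the involution `σ`. An orbit `{i, σ i}` contributes a line when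
`c i * c (σ i) = 1`; otherwise `idAddWeightedComp c σ` is injective on it and both coordinates
survive. -/
def orbitCoords (c : ι → K) (σ : ι → ι) (s : Finset ι) :
    (ι → K) →ₗ[K] ({i ∈ s | c i * c (σ i) = 1} → K) × ({i ∈ s | c i * c (σ i) ≠ 1} → Fin 2 → K) :=
  LinearMap.prod
    (LinearMap.pi fun i => LinearMap.proj i.1 ∘ₗ idAddWeightedComp c σ)
    (LinearMap.pi fun i => LinearMap.pi ![LinearMap.proj i.1, LinearMap.proj (σ i.1)])

/-- The action of `idAddWeightedComp c σ` in the coordinates `orbitCoords c σ s`. -/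
def orbitBlocks (c : ι → K) (σ : ι → ι) (s : Finset ι) :
    Module.End K
      (({i ∈ s | c i * c (σ i) = 1} → K) × ({i ∈ s | c i * c (σ i) ≠ 1} → Fin 2 → K)) :=
  LinearMap.prodMap ((2 : K) • LinearMap.id)
    (LinearMap.pi fun i => Matrix.toLin' !![1, c i.1; c (σ i.1), 1] ∘ₗ LinearMap.proj i)

theorem det_orbitBlocks (c : ι → K) (σ : ι → ι) (s : Finset ι) :
    LinearMap.det (orbitBlocks c σ s) =
      ∏ i ∈ s, if c i * c (σ i) = 1 then 2 else 1 - c i * c (σ i) := by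
  simp only [orbitBlocks, LinearMap.det_prodMap, LinearMap.det_smul, LinearMap.det_id, mul_one,
    Module.finrank_fintype_fun_eq_card, Fintype.card_coe, LinearMap.det_pi, LinearMap.det_toLin',
    Matrix.det_fin_two_of, Finset.prod_ite, Finset.prod_const]
  rw [Finset.prod_coe_sort _ fun i => 1 - c i * c (σ i)]

theorem orbitBlocks_comp_orbitCoords (hσ : Function.Involutive σ) (s : Finset ι) :
    orbitBlocks c σ s ∘ₗ orbitCoords c σ s =
      orbitCoords c σ s ∘ₗ idAddWeightedComp c σ := by
  refine LinearMap.ext fun x => Prod.ext (funext fun i => ?_) (funext fun i => funext fun k => ?_)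
  · have hi := (Finset.mem_filter.1 i.2).2
    change 2 * idAddWeightedComp c σ x i.1 =
      idAddWeightedComp c σ (idAddWeightedComp c σ x) i.1
    rw [idAddWeightedComp_apply c σ (idAddWeightedComp c σ x),
      idAddWeightedComp_apply_involution hσ hi]
    linear_combination (-idAddWeightedComp c σ x i.1) * hi
  · fin_cases k
    · simp [orbitBlocks, orbitCoords, idAddWeightedComp_apply, Matrix.vecHead, Matrix.vecTail]
    · simp [orbitBlocks, orbitCoords, idAddWeightedComp_apply, hσ i.1, add_comm, Matrix.vecHead,
        Matrix.vecTail]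

theorem orbitCoords_eq_zero_iff {s : Finset ι} {x : ι → K} :
    orbitCoords c σ s x = 0 ↔
      (∀ i ∈ s, c i * c (σ i) = 1 → idAddWeightedComp c σ x i = 0) ∧
        ∀ i ∈ s, c i * c (σ i) ≠ 1 → x i = 0 ∧ x (σ i) = 0 := by
  simp [orbitCoords, Prod.ext_iff, funext_iff, Fin.forall_fin_two]

theorem ker_orbitCoords (hσ : Function.Involutive σ) {s : Finset ι} (hs : ∀ i, i ∈ s ∨ σ i ∈ s) :
    LinearMap.ker (orbitCoords c σ s) = LinearMap.ker (idAddWeightedComp c σ) := by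
  ext x
  rw [LinearMap.mem_ker, LinearMap.mem_ker, orbitCoords_eq_zero_iff]
  refine ⟨fun ⟨hline, hplane⟩ => ?_, fun h => ⟨fun i _ _ => congrFun h i, fun i _ hi => ?_⟩⟩
  · have vanish : ∀ i ∈ s, idAddWeightedComp c σ x i = 0 ∧
        idAddWeightedComp c σ x (σ i) = 0 := by
      intro i his
      by_cases hi : c i * c (σ i) = 1
      · rw [idAddWeightedComp_apply_involution hσ hi, hline i his hi, mul_zero]
        exact ⟨rfl, rfl⟩
      · simp [idAddWeightedComp_apply, hσ i, hplane i his hi]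
    funext i
    obtain his | his := hs i
    · exact (vanish i his).1
    · simpa only [hσ i, Pi.zero_apply] using (vanish _ his).2
  · have h₁ : x i + c i * x (σ i) = 0 := congrFun h i
    have h₂ : x (σ i) + c (σ i) * x i = 0 := by
      simpa only [idAddWeightedComp_apply, hσ i, Pi.zero_apply] using congrFun h (σ i)
    have hxi : x i = 0 := by
      refine (mul_eq_zero.1 ?_).resolve_left (sub_ne_zero.2 hi)
      linear_combination c i * h₂ - h₁
    exact ⟨hxi, by simpa [hxi] using h₂⟩

theorem orbitCoords_surjective (h2 : (2 : K) ≠ 0) (hσ : Function.Involutive σ) {s : Finset ι}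
    (hs : ∀ i ∈ s, σ i ∈ s → σ i = i) (hc : ∀ i, σ i = i → c i = 1) :
    Function.Surjective (orbitCoords c σ s) := by
  rintro ⟨y, z⟩
  obtain ⟨x, hline, hplane⟩ := exists_orbit_values h2 hσ hs hc (Function.extend Subtype.val y 0)
    (Function.extend Subtype.val (z · 0) 0) (Function.extend Subtype.val (z · 1) 0)
  refine ⟨x, Prod.ext (funext fun i => ?_) (funext fun i => funext fun k => ?_)⟩
  · obtain ⟨his, hi⟩ := Finset.mem_filter.1 i.2
    exact (hline i his hi).trans (Subtype.val_injective.extend_apply y 0 i)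
  · obtain ⟨his, hi⟩ := Finset.mem_filter.1 i.2
    fin_cases k
    · exact (hplane i his hi).1.trans (Subtype.val_injective.extend_apply (z · 0) 0 i)
    · exact (hplane i his hi).2.trans (Subtype.val_injective.extend_apply (z · 1) 0 i)

theorem det_quotKerMap_idAddWeightedComp (h2 : (2 : K) ≠ 0) (hσ : Function.Involutive σ)
    {s : Finset ι} (hcover : ∀ i, i ∈ s ∨ σ i ∈ s) (hs : ∀ i ∈ s, σ i ∈ s → σ i = i)
    (hc : ∀ i, σ i = i → c i = 1) :
    LinearMap.det (quotKerMap (idAddWeightedComp c σ)) =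
      ∏ i ∈ s, if c i * c (σ i) = 1 then 2 else 1 - c i * c (σ i) := by
  rw [det_quotKerMap_eq_of_comp_eq (orbitCoords_surjective h2 hσ hs hc) (ker_orbitCoords hσ hcover)
    (orbitBlocks_comp_orbitCoords hσ s), det_orbitBlocks]

end WeightedComp

section Phi

variable {F : Type*} [Field F] {d r : ℕ}

theorem revIdxJLW_eq_rev (a : Fin d) : revIdxJLW a = a.rev := by
  ext
  simp only [revIdxJLW, Fin.val_rev]
  omega

theorem muJLW_eq_div (lam : Fin d → Fˣ) (a : Fin d) : muJLW lam a = (lam a / lam a.rev : F) := by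
  rw [muJLW, revIdxJLW_eq_rev, Units.val_inv_eq_inv_val, div_eq_mul_inv]

theorem NmatJLW_eq_submatrix_diagonal (lam : Fin d → Fˣ) :
    NmatJLW F d lam = (diagonal fun i => (lam i : F)).submatrix Fin.rev id := by
  ext p q
  have hpq : (p : ℕ) + q = d - 1 ↔ p.rev = q := by
    rw [Fin.ext_iff, Fin.val_rev]
    omega
  simp only [NmatJLW, of_apply, submatrix_apply, diagonal_apply, hpq, id]
  exact if_ctx_congr Iff.rfl (fun h => by rw [h]) fun _ => rfl

theorem inv_NmatJLW (lam : Fin d → Fˣ) :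
    (NmatJLW F d lam)⁻¹ = (diagonal fun i => (lam i : F)⁻¹).submatrix id Fin.rev := by
  have hinv : (diagonal fun i => (lam i : F))⁻¹ = diagonal fun i => (lam i : F)⁻¹ :=
    inv_eq_left_inv (by simp [diagonal_mul_diagonal])
  rw [NmatJLW_eq_submatrix_diagonal, ← hinv]
  exact inv_submatrix_equiv _ Fin.revPerm (Equiv.refl _)

theorem phiJLW_apply (lam : Fin d → Fˣ) (X : Matrix (Fin d) (Fin d) F) (a b : Fin d) :
    phiJLW F d lam X a b = -(lam b / lam a : F) * X b.rev a.rev := by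
  have hleft (Y : Matrix (Fin d) (Fin d) F) : (NmatJLW F d lam)⁻¹ * Y =
      diagonal (fun i => (lam i : F)⁻¹) * Y.submatrix Fin.rev id := by
    rw [inv_NmatJLW]
    exact (submatrix_id_mul_left _ Y id Fin.revPerm).symm
  have hright (Y : Matrix (Fin d) (Fin d) F) : Y * NmatJLW F d lam =
      Y.submatrix id Fin.rev * diagonal fun i => (lam i : F) := by
    rw [NmatJLW_eq_submatrix_diagonal]
    exact (submatrix_id_mul_right Y _ id Fin.revPerm).symm
  change (-((NmatJLW F d lam)⁻¹ * (Xᵀ * NmatJLW F d lam))) a b = _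
  rw [hleft, hright, Matrix.neg_apply, diagonal_mul, submatrix_apply, mul_diagonal, submatrix_apply,
    transpose_apply, id, id]
  ring

theorem phiJLW_single (lam : Fin d → Fˣ) (i j : Fin d) :
    phiJLW F d lam (Matrix.single i j 1) =
      (-((lam (revIdxJLW i) : F) * (((lam (revIdxJLW j))⁻¹ : Fˣ) : F))) •
        Matrix.single (revIdxJLW j) (revIdxJLW i) 1 := by
  ext a b
  rw [phiJLW_apply, revIdxJLW_eq_rev, revIdxJLW_eq_rev, Units.val_inv_eq_inv_val, Matrix.smul_apply,
    single_apply, single_apply]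
  by_cases h : j.rev = a ∧ i.rev = b
  · obtain ⟨rfl, rfl⟩ := h
    simp [div_eq_mul_inv]
  · have h' : ¬(i = b.rev ∧ j = a.rev) := by rwa [← Fin.rev_eq_iff, ← Fin.rev_eq_iff, and_comm]
    simp [h, h']

theorem phiJLW_injective (lam : Fin d → Fˣ) : Function.Injective (phiJLW F d lam) := by
  refine (injective_iff_map_eq_zero _).2 fun X hX => ?_
  ext a b
  simpa [phiJLW_apply] using congr_fun₂ hX b.rev a.rev

/-- The positions `(i, j)` of the elementary matrices spanning `nSubJLW F d r`. -/
def IsUnipotentPosition (r : ℕ) (p : Fin d × Fin d) : Prop :=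
  (p.1 : ℕ) < p.2 ∧ ¬(r ≤ (p.1 : ℕ) ∧ (p.2 : ℕ) + 1 ≤ d - r)

instance : DecidablePred (IsUnipotentPosition (d := d) r) :=
  fun _ => inferInstanceAs (Decidable (_ ∧ _))

/-- Reflection of a matrix position in the antidiagonal: `phiJLW` maps the line spanned by
the elementary matrix at `p` to the one at `antiTranspose p`. -/
def antiTranspose (p : Fin d × Fin d) : Fin d × Fin d :=
  (p.2.rev, p.1.rev)

theorem antiTranspose_involutive : Function.Involutive (antiTranspose (d := d)) := fun p => by
  simp [antiTranspose]

theorem isUnipotentPosition_antiTranspose {p : Fin d × Fin d} :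
    IsUnipotentPosition r (antiTranspose p) ↔ IsUnipotentPosition r p := by
  simp only [IsUnipotentPosition, antiTranspose, Fin.val_rev]
  omega

theorem mem_nSubJLW {X : Matrix (Fin d) (Fin d) F} :
    X ∈ nSubJLW F d r ↔ ∀ p, ¬IsUnipotentPosition r p → X p.1 p.2 = 0 :=
  ⟨fun h p => h p.1 p.2, fun h a b => h (a, b)⟩

theorem phiJLW_mem_nSubJLW_iff (lam : Fin d → Fˣ) {X : Matrix (Fin d) (Fin d) F} :
    phiJLW F d lam X ∈ nSubJLW F d r ↔ X ∈ nSubJLW F d r := by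
  rw [mem_nSubJLW, mem_nSubJLW, antiTranspose_involutive.surjective.forall]
  simp only [isUnipotentPosition_antiTranspose]
  simp [phiJLW_apply, antiTranspose]

theorem phiJLW_image_nSubJLW (lam : Fin d → Fˣ) :
    phiJLW F d lam '' (nSubJLW F d r : Set (Matrix (Fin d) (Fin d) F)) = nSubJLW F d r := by
  have hpre : phiJLW F d lam ⁻¹' nSubJLW F d r = nSubJLW F d r :=
    Set.ext fun _ => phiJLW_mem_nSubJLW_iff lam
  conv_lhs => rw [← hpre]
  exact Set.image_preimage_eq _ (LinearMap.injective_iff_surjective.1 (phiJLW_injective lam))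

/-- The endomorphism `id - φ` of `𝔫`. -/
noncomputable def idSubPhi (r : ℕ) (lam : Fin d → Fˣ) : nSubJLW F d r →ₗ[F] nSubJLW F d r :=
  LinearMap.id - (phiJLW F d lam).restrict fun _ => (phiJLW_mem_nSubJLW_iff lam).2

theorem fixSubJLW_eq_ker (r : ℕ) (lam : Fin d → Fˣ) :
    fixSubJLW F d r lam = LinearMap.ker (idSubPhi r lam) := by
  ext X
  simp only [fixSubJLW, idSubPhi, Submodule.mem_comap, LinearMap.mem_ker, LinearMap.sub_apply,
    LinearMap.id_apply, sub_eq_zero, Subtype.ext_iff, LinearMap.coe_restrict_apply]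
  exact eq_comm

/-- The coordinates of `𝔫` in its basis of elementary matrices. -/
def unipotentEntries (F : Type*) [Field F] (d r : ℕ) :
    nSubJLW F d r →ₗ[F] ({p : Fin d × Fin d // IsUnipotentPosition r p} → F) where
  toFun X p := X.1 p.1.1 p.1.2
  map_add' _ _ := rfl
  map_smul' _ _ := rfl

theorem unipotentEntries_bijective : Function.Bijective (unipotentEntries F d r) := by
  constructor
  · refine (injective_iff_map_eq_zero _).2 fun X hX => Subtype.ext ?_
    ext a b
    by_cases h : IsUnipotentPosition r (a, b)
    · exact congrFun hX ⟨(a, b), h⟩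
    · exact X.2 a b h
  · intro x
    refine ⟨⟨of fun a b => if h : IsUnipotentPosition r (a, b) then x ⟨(a, b), h⟩ else 0,
      fun a b h => dif_neg h⟩, funext fun p => dif_pos p.2⟩

end Phi

section Determinant

variable {F : Type*} [Field F] {d r : ℕ}

/-- The involution `antiTranspose` on the positions of `𝔫`. -/
def unipotentAntiTranspose (p : {p : Fin d × Fin d // IsUnipotentPosition r p}) :
    {p : Fin d × Fin d // IsUnipotentPosition r p} :=
  ⟨antiTranspose p.1, isUnipotentPosition_antiTranspose.2 p.2⟩

theorem unipotentAntiTranspose_involutive :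
    Function.Involutive (unipotentAntiTranspose (d := d) (r := r)) :=
  fun p => Subtype.ext (antiTranspose_involutive p.1)

/-- The scalar by which `-φ` multiplies the entry at `antiTranspose p` when moving it to `p`. -/
def entryWeight (lam : Fin d → Fˣ) (p : {p : Fin d × Fin d // IsUnipotentPosition r p}) : F :=
  lam p.1.2 / lam p.1.1

theorem entryWeight_mul_entryWeight (lam : Fin d → Fˣ)
    (p : {p : Fin d × Fin d // IsUnipotentPosition r p}) :
    entryWeight lam p * entryWeight lam (unipotentAntiTranspose p) =
      muJLW lam p.1.2 / muJLW lam p.1.1 := by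
  simp only [entryWeight, unipotentAntiTranspose, antiTranspose, muJLW_eq_div]
  rw [div_mul_div_comm, div_div_div_eq, mul_comm (lam p.1.1 : F)]

theorem unipotentEntries_idSubPhi (lam : Fin d → Fˣ) (X : nSubJLW F d r) :
    unipotentEntries F d r (idSubPhi r lam X) =
      idAddWeightedComp (entryWeight lam) unipotentAntiTranspose (unipotentEntries F d r X) := by
  funext p
  change X.1 p.1.1 p.1.2 - phiJLW F d lam X.1 p.1.1 p.1.2 =
    X.1 p.1.1 p.1.2 + lam p.1.2 / lam p.1.1 * X.1 p.1.2.rev p.1.1.rev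
  rw [phiJLW_apply]
  ring

theorem det_quotKerMap_idSubPhi_eq_det (lam : Fin d → Fˣ) :
    LinearMap.det (quotKerMap (idSubPhi r lam)) =
      LinearMap.det (quotKerMap
        (idAddWeightedComp (entryWeight (r := r) lam) unipotentAntiTranspose)) := by
  refine det_quotKerMap_eq_of_comp_eq (P := Submodule.mkQ _ ∘ₗ unipotentEntries F d r)
    ((Submodule.mkQ_surjective _).comp unipotentEntries_bijective.2) ?_ ?_
  · ext X
    simp only [LinearMap.mem_ker, LinearMap.comp_apply, Submodule.mkQ_apply,
      Submodule.Quotient.mk_eq_zero, ← unipotentEntries_idSubPhi]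
    exact map_eq_zero_iff _ unipotentEntries_bijective.1
  · ext X
    exact congrArg (Submodule.mkQ _) (unipotentEntries_idSubPhi lam X).symm

/-- The positions of `𝔫` on or above the antidiagonal, which represent the orbits of
`unipotentAntiTranspose`. -/
def unipotentOrbitReps (d r : ℕ) : Finset {p : Fin d × Fin d // IsUnipotentPosition r p} :=
  {p | p.1.1 ≤ p.1.2.rev}

theorem mem_unipotentOrbitReps {p : {p : Fin d × Fin d // IsUnipotentPosition r p}} :
    p ∈ unipotentOrbitReps d r ↔ p.1.1 ≤ p.1.2.rev := by
  simp [unipotentOrbitReps]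

theorem mem_or_unipotentAntiTranspose_mem
    (p : {p : Fin d × Fin d // IsUnipotentPosition r p}) :
    p ∈ unipotentOrbitReps d r ∨ unipotentAntiTranspose p ∈ unipotentOrbitReps d r := by
  simpa [mem_unipotentOrbitReps, unipotentAntiTranspose, antiTranspose] using
    le_total p.1.1 p.1.2.rev

theorem unipotentAntiTranspose_eq_self_of_mem
    {p : {p : Fin d × Fin d // IsUnipotentPosition r p}} (hp : p ∈ unipotentOrbitReps d r)
    (hp' : unipotentAntiTranspose p ∈ unipotentOrbitReps d r) : unipotentAntiTranspose p = p := by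
  simp only [mem_unipotentOrbitReps, unipotentAntiTranspose, antiTranspose, Fin.rev_rev] at hp hp'
  have h : p.1.2.rev = p.1.1 := le_antisymm hp' hp
  exact Subtype.ext (Prod.ext h (Fin.rev_eq_iff.2 h.symm))

theorem isUnipotentPosition_and_le_rev_iff {a b : Fin d} :
    IsUnipotentPosition r (a, b) ∧ a ≤ b.rev ↔ (a : ℕ) < r ∧ b ∈ Finset.Ioc a a.rev := by
  simp only [IsUnipotentPosition, Finset.mem_Ioc, Fin.le_def, Fin.lt_def, Fin.val_rev]
  omega

theorem fst_lt_of_mem_unipotentOrbitReps {p : {p : Fin d × Fin d // IsUnipotentPosition r p}}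
    (hp : p ∈ unipotentOrbitReps d r) : (p.1.1 : ℕ) < r :=
  (isUnipotentPosition_and_le_rev_iff.1 ⟨p.2, mem_unipotentOrbitReps.1 hp⟩).1

theorem prod_unipotentOrbitReps {M : Type*} [CommMonoid M] (f : Fin d → M) :
    ∏ p ∈ unipotentOrbitReps d r, f p.1.2 =
      ∏ a ∈ {a : Fin d | (a : ℕ) < r}, ∏ b ∈ Finset.Ioc a a.rev, f b := by
  rw [Finset.prod_sigma']
  refine Finset.prod_bij (fun p _ => ⟨p.1.1, p.1.2⟩) (fun p hp => ?_) (fun p _ q _ h => ?_)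
    (fun ⟨a, b⟩ hab => ?_) fun p _ => rfl
  · simpa using isUnipotentPosition_and_le_rev_iff.1 ⟨p.2, mem_unipotentOrbitReps.1 hp⟩
  · rw [Sigma.mk.injEq, heq_eq_eq] at h
    exact Subtype.ext (Prod.ext h.1 h.2)
  · obtain ⟨hpos, hle⟩ := isUnipotentPosition_and_le_rev_iff.2 (by simpa using hab)
    exact ⟨⟨(a, b), hpos⟩, mem_unipotentOrbitReps.2 hle, rfl⟩

theorem entryWeight_eq_one_of_fixed {lam : Fin d → Fˣ}
    (hmu : ∀ a : Fin d, (a : ℕ) < r → muJLW lam a = 1)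
    {p : {p : Fin d × Fin d // IsUnipotentPosition r p}} (hp : unipotentAntiTranspose p = p) :
    entryWeight lam p = 1 := by
  have hrev : p.1.2.rev = p.1.1 := congrArg (·.1.1) hp
  have hmu_fst := hmu p.1.1 (fst_lt_of_mem_unipotentOrbitReps
    (mem_unipotentOrbitReps.2 hrev.ge))
  rw [muJLW_eq_div, ← hrev, Fin.rev_rev] at hmu_fst
  rw [entryWeight, ← hrev, ← inv_div, hmu_fst, inv_one]

theorem det_quotKerMap_idSubPhi [DecidableEq F] (h2 : (2 : F) ≠ 0) {lam : Fin d → Fˣ}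
    (hmu : ∀ a : Fin d, (a : ℕ) < r → muJLW lam a = 1) :
    LinearMap.det (quotKerMap (idSubPhi r lam)) =
      ∏ a ∈ {a : Fin d | (a : ℕ) < r}, ∏ b ∈ Finset.Ioc a a.rev,
        if muJLW lam b = 1 then 2 else 1 - muJLW lam b := by
  rw [det_quotKerMap_idSubPhi_eq_det, det_quotKerMap_idAddWeightedComp h2
    unipotentAntiTranspose_involutive mem_or_unipotentAntiTranspose_mem
    (fun _ => unipotentAntiTranspose_eq_self_of_mem) (fun _ => entryWeight_eq_one_of_fixed hmu),
    ← prod_unipotentOrbitReps]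
  refine Finset.prod_congr rfl fun p hp => ?_
  rw [entryWeight_mul_entryWeight, hmu _ (fst_lt_of_mem_unipotentOrbitReps hp), div_one]

end Determinant

section Count

variable {r m : ℕ}

/-- The indices `r + 1 ≤ i ≤ d - r - 1` (1-based), where `d = m + 2 * r + 1`. -/
def middleIndices (r m : ℕ) : Finset (Fin (m + 2 * r + 1)) :=
  {a | r ≤ (a : ℕ) ∧ (a : ℕ) + r + 2 ≤ m + 2 * r + 1}

theorem card_middleIndices : (middleIndices r m).card = m := by
  have h : middleIndices r m = Finset.Ico ⟨r, by omega⟩ ⟨m + r, by omega⟩ := by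
    ext a
    simp only [middleIndices, Finset.mem_filter_univ, Finset.mem_Ico, Fin.le_def, Fin.lt_def]
    omega
  rw [h, Fin.card_Ico, Nat.add_sub_cancel]

theorem prod_Ioc_rev_eq {M : Type*} [CommMonoid M] {f : Fin (m + 2 * r + 1) → M} {t : M}
    (hf : ∀ b : Fin (m + 2 * r + 1), (b : ℕ) < r ∨ m + r ≤ (b : ℕ) → f b = t)
    {a : Fin (m + 2 * r + 1)} (ha : (a : ℕ) < r) :
    ∏ b ∈ Finset.Ioc a a.rev, f b = t ^ (2 * (r - a)) * ∏ b ∈ middleIndices r m, f b := by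
  have hsub : middleIndices r m ⊆ Finset.Ioc a a.rev := by
    intro b
    simp only [middleIndices, Finset.mem_filter_univ, Finset.mem_Ioc, Fin.le_def, Fin.lt_def,
      Fin.val_rev]
    omega
  have hcard : (Finset.Ioc a a.rev \ middleIndices r m).card = 2 * (r - a) := by
    rw [Finset.card_sdiff_of_subset hsub, Fin.card_Ioc, card_middleIndices, Fin.val_rev]
    omega
  have hout : ∀ b ∈ Finset.Ioc a a.rev \ middleIndices r m, f b = t := by
    intro b hb
    rw [Finset.mem_sdiff, middleIndices, Finset.mem_filter_univ] at hb
    exact hf b (by omega)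
  rw [← Finset.prod_sdiff hsub, Finset.prod_eq_pow_card hout, hcard]

theorem sum_range_two_mul_sub (r : ℕ) : ∑ i ∈ Finset.range r, 2 * (r - i) = r ^ 2 + r := by
  induction r with
  | zero => rfl
  | succ r ih =>
    simp only [Finset.sum_range_succ', Nat.add_sub_add_right, Nat.sub_zero, ih]
    ring

theorem prod_prod_Ioc_rev {M : Type*} [CommMonoid M] {f : Fin (m + 2 * r + 1) → M} {t : M}
    (hf : ∀ b : Fin (m + 2 * r + 1), (b : ℕ) < r ∨ m + r ≤ (b : ℕ) → f b = t) :
    ∏ a ∈ {a : Fin (m + 2 * r + 1) | (a : ℕ) < r}, ∏ b ∈ Finset.Ioc a a.rev, f b =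
      t ^ (r ^ 2 + r) * (∏ b ∈ middleIndices r m, f b) ^ r := by
  have hcard : ({a : Fin (m + 2 * r + 1) | (a : ℕ) < r} : Finset _).card = r := by
    rw [Fin.card_filter_val_lt]
    omega
  have hsum : ∑ a ∈ {a : Fin (m + 2 * r + 1) | (a : ℕ) < r}, 2 * (r - (a : ℕ)) = r ^ 2 + r := by
    rw [← sum_range_two_mul_sub]
    refine Finset.sum_nbij (fun a => (a : ℕ)) (fun a ha => ?_) Fin.val_injective.injOn
      (fun i hi => ?_) fun _ _ => rfl
    · simpa using ha
    · have hir : i < r := Finset.mem_range.1 hi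
      exact ⟨⟨i, by omega⟩, by simpa using hir, rfl⟩
  rw [Finset.prod_congr rfl fun a ha => prod_Ioc_rev_eq hf (Finset.mem_filter_univ a |>.1 ha),
    Finset.prod_mul_distrib, Finset.prod_pow_eq_pow_sum, Finset.prod_const, hsum, hcard]

theorem prod_middleIndices_ite {M : Type*} [CommMonoid M] (p : Fin (m + 2 * r + 1) → Prop)
    [DecidablePred p] (t : M) (f : Fin (m + 2 * r + 1) → M) :
    ∏ b ∈ middleIndices r m, (if p b then t else f b) =
      t ^ (Finset.univ.filter fun a : Fin (m + 2 * r + 1) =>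
          r ≤ (a : ℕ) ∧ (a : ℕ) + r + 2 ≤ m + 2 * r + 1 ∧ p a).card *
        ∏ a ∈ Finset.univ.filter fun a : Fin (m + 2 * r + 1) =>
          r ≤ (a : ℕ) ∧ (a : ℕ) + r + 2 ≤ m + 2 * r + 1 ∧ ¬p a, f a := by
  simp only [Finset.prod_ite, Finset.prod_const, middleIndices, Finset.filter_filter, and_assoc]

end Count

open Classical in
/-- The Jacobian computation of Lemma 3.4 of the paper: with `d = m + 2r + 1`,
`μ_i = 1` for `i ∈ {1,…,r} ∪ {d-r,…,d}`, `N` and `φ(X) = -N⁻¹XᵀN` as above (so that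
`φ(E_{i,j}) = -(λ_{d+1-i}/λ_{d+1-j})·E_{d+1-j,d+1-i}`), the map `φ` preserves `𝔫`,
`id - φ` induces an endomorphism of `𝔫/𝔫^φ`, and its determinant equals
`2^{r²+r+r·m''} · (∏_{r+1 ≤ i ≤ d-r-1, μ_i ≠ 1} (1 - μ_i))^r`, where
`m'' = #{i : r+1 ≤ i ≤ d-r-1, μ_i = 1}`. -/
theorem jacobian_det_twisted_unipotent (F : Type*) [Field F] (hF : ringChar F ≠ 2)
    (r m : ℕ) (lam : Fin (m + 2 * r + 1) → Fˣ)
    (hmu : ∀ a : Fin (m + 2 * r + 1),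
      ((a : ℕ) < r ∨ m + r ≤ (a : ℕ)) → muJLW lam a = 1) :
    -- φ(E_{i,j}) = -(λ_{d+1-i}/λ_{d+1-j}) E_{d+1-j, d+1-i}
    (∀ i j : Fin (m + 2 * r + 1),
      phiJLW F (m + 2 * r + 1) lam (Matrix.single i j (1 : F))
        = (-((lam (revIdxJLW i) : F) * (((lam (revIdxJLW j))⁻¹ : Fˣ) : F))) •
            Matrix.single (revIdxJLW j) (revIdxJLW i) (1 : F)) ∧
    -- φ(𝔫) = 𝔫
    (⇑(phiJLW F (m + 2 * r + 1) lam) ''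
        (nSubJLW F (m + 2 * r + 1) r : Set (Matrix (Fin (m + 2 * r + 1)) (Fin (m + 2 * r + 1)) F))
      = (nSubJLW F (m + 2 * r + 1) r :
          Set (Matrix (Fin (m + 2 * r + 1)) (Fin (m + 2 * r + 1)) F))) ∧
    -- id - φ induces an endomorphism of 𝔫/𝔫^φ, whose determinant is as stated
    (∃ ψ : (↥(nSubJLW F (m + 2 * r + 1) r) ⧸ fixSubJLW F (m + 2 * r + 1) r lam) →ₗ[F]
           (↥(nSubJLW F (m + 2 * r + 1) r) ⧸ fixSubJLW F (m + 2 * r + 1) r lam),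
      (∀ X : ↥(nSubJLW F (m + 2 * r + 1) r), ∃ Y : ↥(nSubJLW F (m + 2 * r + 1) r),
        (Y : Matrix (Fin (m + 2 * r + 1)) (Fin (m + 2 * r + 1)) F)
          = (X : Matrix (Fin (m + 2 * r + 1)) (Fin (m + 2 * r + 1)) F)
            - phiJLW F (m + 2 * r + 1) lam
                (X : Matrix (Fin (m + 2 * r + 1)) (Fin (m + 2 * r + 1)) F)) ∧
      (∀ X Y : ↥(nSubJLW F (m + 2 * r + 1) r),
        (Y : Matrix (Fin (m + 2 * r + 1)) (Fin (m + 2 * r + 1)) F)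
          = (X : Matrix (Fin (m + 2 * r + 1)) (Fin (m + 2 * r + 1)) F)
            - phiJLW F (m + 2 * r + 1) lam
                (X : Matrix (Fin (m + 2 * r + 1)) (Fin (m + 2 * r + 1)) F) →
        ψ (Submodule.Quotient.mk X) = Submodule.Quotient.mk Y) ∧
      LinearMap.det ψ =
        (2 : F) ^ (r ^ 2 + r + r * (Finset.univ.filter
            (fun a : Fin (m + 2 * r + 1) =>
              r ≤ (a : ℕ) ∧ (a : ℕ) + r + 2 ≤ m + 2 * r + 1 ∧ muJLW lam a = 1)).card) *
        (∏ a ∈ Finset.univ.filter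
            (fun a : Fin (m + 2 * r + 1) =>
              r ≤ (a : ℕ) ∧ (a : ℕ) + r + 2 ≤ m + 2 * r + 1 ∧ muJLW lam a ≠ 1),
          (1 - muJLW lam a)) ^ r) := by
  refine ⟨phiJLW_single lam, phiJLW_image_nSubJLW lam, ?_⟩
  have h2 : (2 : F) ≠ 0 := Ring.two_ne_zero hF
  rw [fixSubJLW_eq_ker]
  refine ⟨quotKerMap (idSubPhi r lam), fun X => ⟨idSubPhi r lam X, rfl⟩, fun X Y hY => ?_, ?_⟩
  · exact congrArg Submodule.Quotient.mk (Subtype.ext hY).symm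
  · rw [det_quotKerMap_idSubPhi h2 fun a ha => hmu a (Or.inl ha),
      prod_prod_Ioc_rev fun b hb => if_pos (hmu b hb), prod_middleIndices_ite, mul_pow, ← mul_assoc,
      ← pow_mul', ← pow_add]
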